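/- Let Ω be a class of C*-algebras and let Ω₁ be the class of unital C*-algebras consisting of all C*-algebras isomorphic either to a unital algebra in Ω or to the unitization of an algebra in Ω. If A is a simple unital C*-algebra and A belongs to the class GTAΩ, then A belongs to the class WTAΩ₁. -/

import Mathlib

open Filter Topology

/-- An element of a C*-algebra is positive if it is of the form `x* x`. -/
def IsPos {A : Type*} [Mul A] [Star A] (a : A) : Prop := ∃ x : A, a = star x * x

/-- Cuntz subequivalence `a ≾_A b`. -/
def CuntzBelow {A : Type*} [NonUnitalNormedRing A] [Star A] (a b : A) : Prop :=
  ∃ v : ℕ → A, Tendsto (fun n => ‖v n * b * star (v n) - a‖) atTop (nhds 0)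

/-- `x ∈_ε S`: `x` lies within `ε` of the set `S`. -/
def ApproxIn {A : Type*} [NormedAddGroup A] (x : A) (S : Set A) (ε : ℝ) : Prop :=
  ∃ y ∈ S, ‖x - y‖ < ε

/-- `(a - ε)₊`, via continuous functional calculus. -/
noncomputable def CutPos {A : Type*} [CStarAlgebra A] (a : A) (ε : ℝ) : A :=
  cfc (fun t : ℝ => max (t - ε) 0) a

/-- A C*-algebra is simple if it is nontrivial and has no proper nontrivial
closed two-sided ideals. -/
def IsSimpleCStarAlgebra (A : Type*) [NonUnitalNormedRing A] : Prop :=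
  Nontrivial A ∧ ∀ I : TwoSidedIdeal A, IsClosed (I : Set A) →
    (I : Set A) = {0} ∨ (I : Set A) = Set.univ

variable {A : Type*} [CStarAlgebra A]

/-- Membership in the class `WTAΩ` (Elliott–Fan–Fang weak tracial approximation),
where the class `Ω` is modelled as a set of (C*-)subalgebras of `A`. -/
def MemWTA (Ω : Set (NonUnitalStarSubalgebra ℂ A)) : Prop :=
  ∀ ε : ℝ, 0 < ε → ∀ F : Finset A, ∀ a : A, IsPos a → a ≠ 0 →
    ∃ B ∈ Ω, IsClosed (B : Set A) ∧
      ∃ p ∈ B, IsSelfAdjoint p ∧ p * p = p ∧ (∀ b ∈ B, p * b = b ∧ b * p = b) ∧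
        ∃ g ∈ B, IsPos g ∧ IsPos (1 - g) ∧
          (∀ x ∈ F, ApproxIn ((p - g) * x) (B : Set A) ε ∧
            ApproxIn (x * (p - g)) (B : Set A) ε) ∧
          (∀ x ∈ F, ‖(p - g) * x - x * (p - g)‖ < ε) ∧
          CuntzBelow (1 - (p - g)) a ∧
          ‖a‖ - ε ≤ ‖(p - g) * a * (p - g)‖

/-- Membership in the class `GTAΩ` (generalized/weak tracial approximation),
where the class `Ω` is modelled as a set of (C*-)subalgebras of `A`. -/
def MemGTA (Ω : Set (NonUnitalStarSubalgebra ℂ A)) : Prop :=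
  ∀ ε : ℝ, 0 < ε → ∀ F : Finset A, ∀ a b : A, IsPos a → ‖a‖ = 1 → IsPos b → ‖b‖ ≤ 1 →
    ∃ B ∈ Ω, IsClosed (B : Set A) ∧
      ∃ r ∈ B, IsPos r ∧ ‖r‖ ≤ 1 ∧
        (∀ x ∈ F, ApproxIn (r * x) (B : Set A) ε ∧ ApproxIn (x * r) (B : Set A) ε) ∧
        (∀ x ∈ F, ‖r * x - x * r‖ < ε) ∧
        CuntzBelow (CutPos (b * b - b * r * b) ε) a ∧
        1 - ε ≤ ‖r * a * r‖

lemma isPos_cfc {c : A} (f : ℝ → ℝ) (hf : Continuous f) (h0 : ∀ t ∈ spectrum ℝ c, 0 ≤ f t) :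
    IsPos (cfc f c) := by
  refine ⟨cfc (fun t => √(f t)) c, ?_⟩
  rw [(cfc_predicate (fun t => √(f t)) c : IsSelfAdjoint _).star_eq,
    ← cfc_mul _ _ _ (by fun_prop) (by fun_prop)]
  exact cfc_congr fun t ht => (Real.mul_self_sqrt (h0 t ht)).symm

lemma IsPos.isSelfAdjoint {a : A} (ha : IsPos a) : IsSelfAdjoint a := by
  obtain ⟨x, rfl⟩ := ha
  exact .star_mul_self x

lemma IsPos.real_smul {a : A} (ha : IsPos a) {s : ℝ} (hs : 0 ≤ s) : IsPos (s • a) := by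
  obtain ⟨x, rfl⟩ := ha
  exact ⟨√s • x, by simp [smul_smul, Real.mul_self_sqrt hs]⟩

/-- The spectrum of `1 - r` lies in `[0, 1]` when `r` is a positive contraction. -/
lemma IsPos.spectrum_one_sub_subset [Nontrivial A] {r : A} (hr : IsPos r) (hr1 : ‖r‖ ≤ 1) :
    spectrum ℝ (1 - r) ⊆ Set.Icc 0 1 := by
  intro t ht
  have hmem : 1 - t ∈ spectrum ℝ r := by
    rw [spectrum.mem_iff] at ht ⊢
    contrapose! ht
    convert ht.neg using 1
    simp only [map_sub, map_one]
    abel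
  have hle := (Real.le_norm_self _).trans ((spectrum.norm_le_norm_of_mem hmem).trans hr1)
  obtain ⟨x, rfl⟩ := hr
  have h0 := spectrum_star_mul_self_nonneg _ hmem
  constructor <;> linarith

lemma isPos_cutPos (c : A) (δ : ℝ) : IsPos (CutPos c δ) :=
  isPos_cfc _ (by fun_prop) fun _ _ => le_max_right _ _

lemma one_sub_cutPos {c : A} (hc : IsSelfAdjoint c) (δ : ℝ) :
    1 - CutPos c δ = cfc (fun t : ℝ => 1 - max (t - δ) 0) c := by
  rw [cfc_sub _ _ _ (by fun_prop) (by fun_prop), cfc_const_one ℝ c, CutPos]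

section CutPos

variable [Nontrivial A] {r : A} {δ : ℝ}

lemma IsPos.isPos_one_sub_cutPos (hr : IsPos r) (hr1 : ‖r‖ ≤ 1) (hδ : 0 ≤ δ) :
    IsPos (1 - CutPos (1 - r) δ) := by
  have hsa : IsSelfAdjoint (1 - r) := (IsSelfAdjoint.one A).sub hr.isSelfAdjoint
  rw [one_sub_cutPos hsa]
  refine isPos_cfc _ (by fun_prop) fun t ht => ?_
  have := (hr.spectrum_one_sub_subset hr1 ht).2
  exact sub_nonneg.2 (max_le (by linarith) zero_le_one)

lemma IsPos.norm_one_sub_cutPos_le (hr : IsPos r) (hr1 : ‖r‖ ≤ 1) (hδ : 0 ≤ δ) :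
    ‖1 - CutPos (1 - r) δ‖ ≤ 1 := by
  have hsa : IsSelfAdjoint (1 - r) := (IsSelfAdjoint.one A).sub hr.isSelfAdjoint
  rw [one_sub_cutPos hsa]
  refine norm_cfc_le zero_le_one fun t ht => ?_
  have := (hr.spectrum_one_sub_subset hr1 ht).2
  rw [Real.norm_of_nonneg (sub_nonneg.2 (max_le (by linarith) zero_le_one))]
  linarith [le_max_right (t - δ) 0]

lemma IsPos.norm_one_sub_cutPos_sub_le (hr : IsPos r) (hr1 : ‖r‖ ≤ 1) (hδ : 0 ≤ δ) :
    ‖1 - CutPos (1 - r) δ - r‖ ≤ δ := by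
  have hsa : IsSelfAdjoint (1 - r) := (IsSelfAdjoint.one A).sub hr.isSelfAdjoint
  have heq : 1 - CutPos (1 - r) δ - r = cfc (fun t : ℝ => t - max (t - δ) 0) (1 - r) := by
    rw [cfc_sub _ _ _ (by fun_prop) (by fun_prop), cfc_id' ℝ (1 - r), CutPos]
    abel
  rw [heq]
  refine norm_cfc_le hδ fun t ht => ?_
  have := (hr.spectrum_one_sub_subset hr1 ht).1
  rw [Real.norm_of_nonneg (sub_nonneg.2 (max_le (by linarith) this))]
  linarith [le_max_left (t - δ) 0]

end CutPos

lemma CuntzBelow.of_real_smul_right {a b : A} {s : ℝ} (hs : 0 ≤ s) (h : CuntzBelow a (s • b)) :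
    CuntzBelow a b := by
  obtain ⟨v, hv⟩ := h
  refine ⟨fun n => √s • v n, hv.congr fun n => ?_⟩
  simp [smul_smul, Real.mul_self_sqrt hs]

lemma NonUnitalStarSubalgebra.isClosed_adjoin (C : NonUnitalStarSubalgebra ℂ A)
    (hC : IsClosed (C : Set A)) : IsClosed (StarAlgebra.adjoin ℂ (C : Set A) : Set A) := by
  have heq : (StarAlgebra.adjoin ℂ (C : Set A) : Set A) =
      ((C.toSubmodule ⊔ Submodule.span ℂ {(1 : A)} : Submodule ℂ A) : Set A) := by
    ext x
    rw [← NonUnitalStarSubalgebra.unitization_range, SetLike.mem_coe, SetLike.mem_coe,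
      Submodule.mem_sup]
    constructor
    · rintro ⟨y, rfl⟩
      refine ⟨y.snd, y.snd.2, algebraMap ℂ A y.fst, ?_, add_comm _ _⟩
      rw [Algebra.algebraMap_eq_smul_one]
      exact Submodule.smul_mem _ _ (Submodule.mem_span_singleton_self _)
    · rintro ⟨c, hc, z, hz, rfl⟩
      obtain ⟨l, rfl⟩ := Submodule.mem_span_singleton.1 hz
      refine ⟨Unitization.inl l + ((⟨c, hc⟩ : C) : Unitization ℂ C), ?_⟩
      simp [Algebra.algebraMap_eq_smul_one, add_comm]
  rw [heq]
  exact Submodule.isClosed_sup_finiteDimensional _ _ hC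

/-- Every closed subalgebra `C` is contained in a closed subalgebra containing `1_A` that is
either `C` itself or isomorphic to the unitization of `C`. -/
lemma exists_isClosed_one_mem_unitization (C : NonUnitalStarSubalgebra ℂ A)
    (hC : IsClosed (C : Set A)) :
    ∃ B : NonUnitalStarSubalgebra ℂ A, IsClosed (B : Set A) ∧ (1 : A) ∈ B ∧ C ≤ B ∧
      (((∃ e ∈ C, ∀ c ∈ C, e * c = c ∧ c * e = c) ∧ Nonempty (B ≃⋆ₐ[ℂ] C)) ∨
        Nonempty (B ≃⋆ₐ[ℂ] Unitization ℂ C)) := by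
  by_cases h1 : (1 : A) ∈ C
  · exact ⟨C, hC, h1, le_rfl, .inl ⟨⟨1, h1, by simp⟩, ⟨.refl ℂ C⟩⟩⟩
  · exact ⟨(StarAlgebra.adjoin ℂ (C : Set A)).toNonUnitalStarSubalgebra, C.isClosed_adjoin hC,
      one_mem (StarAlgebra.adjoin ℂ (C : Set A)), StarAlgebra.subset_adjoin ℂ _,
      .inr ⟨(NonUnitalStarSubalgebra.unitizationStarAlgEquiv C h1).symm⟩⟩

lemma NonUnitalStarSubalgebra.cutPos_mem {B : NonUnitalStarSubalgebra ℂ A}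
    (hB : IsClosed (B : Set A)) (h1 : (1 : A) ∈ B) {c : A} (hc : c ∈ B) (δ : ℝ) :
    CutPos c δ ∈ B := by
  have : IsClosed (B.toStarSubalgebra h1 : Set A) := hB
  exact cfc_mem (𝕜' := ℂ) (s := B.toStarSubalgebra h1) _ hc

lemma norm_mul_mul_self_sub_le {r s a : A} {δ : ℝ} (hr : ‖r‖ ≤ 1) (hs : ‖s‖ ≤ 1)
    (h : ‖s - r‖ ≤ δ) : ‖r * a * r‖ - 2 * δ * ‖a‖ ≤ ‖s * a * s‖ := by
  have hδ : 0 ≤ δ := (norm_nonneg _).trans h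
  have h₁ : ‖(s - r) * a * r‖ ≤ δ * ‖a‖ * 1 := (norm_mul₃_le ..).trans (by gcongr)
  have h₂ : ‖s * a * (s - r)‖ ≤ 1 * ‖a‖ * δ := (norm_mul₃_le ..).trans (by gcongr)
  have heq : r * a * r = s * a * s - ((s - r) * a * r + s * a * (s - r)) := by noncomm_ring
  have := (norm_sub_le (s * a * s) ((s - r) * a * r + s * a * (s - r))).trans
    (add_le_add_right (norm_add_le _ _) _)
  rw [← heq] at this
  linarith

/-- Let `Ω` be a class of C*-algebras and let `Ω₁` be the class of
unital C*-algebras consisting of all C*-algebras isomorphic either to a unital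
algebra in `Ω` or to the unitization of an algebra in `Ω`.  If `A` is a simple
unital C*-algebra in `GTAΩ`, then `A ∈ WTAΩ₁`. -/
theorem memWTA_unitization_of_memGTA
    (hA : IsSimpleCStarAlgebra A)
    (Ω : Set (NonUnitalStarSubalgebra ℂ A))
    (h : MemGTA Ω) :
    MemWTA {B : NonUnitalStarSubalgebra ℂ A | ∃ C ∈ Ω,
      ((∃ e ∈ C, ∀ c ∈ C, e * c = c ∧ c * e = c) ∧ Nonempty (B ≃⋆ₐ[ℂ] C)) ∨
        Nonempty (B ≃⋆ₐ[ℂ] Unitization ℂ C)} := by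
  have := hA.1
  intro ε hε F a ha ha0
  have hna : 0 < ‖a‖ := norm_pos_iff.2 ha0
  set M : ℝ := 1 + ‖a‖ + ∑ x ∈ F, ‖x‖
  have hsum : 0 ≤ ∑ x ∈ F, ‖x‖ := Finset.sum_nonneg fun _ _ => norm_nonneg _
  have hM0 : 0 < M := by linarith
  set δ : ℝ := ε / (4 * M) with hδdef
  have hδ : 0 < δ := by positivity
  have hδM : δ * M = ε / 4 := by rw [hδdef]; field_simp
  have hδa : δ * ‖a‖ ≤ ε / 4 := hδM ▸ mul_le_mul_of_nonneg_left (by linarith) hδ.le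
  have hδF : ∀ x ∈ F, δ + δ * ‖x‖ ≤ ε / 4 := fun x hx => by
    have := Finset.single_le_sum (f := fun x : A => ‖x‖) (fun _ _ => norm_nonneg _) hx
    calc δ + δ * ‖x‖ = δ * (1 + ‖x‖) := by ring
      _ ≤ δ * M := mul_le_mul_of_nonneg_left (by linarith) hδ.le
      _ = ε / 4 := hδM
  have hna' : ‖‖a‖⁻¹ • a‖ = 1 := by simp [norm_smul, hna.ne']
  obtain ⟨C, hCΩ, hC, r, hrC, hr, hr1, happrox, hcomm, hcuntz, hnorm⟩ :=
    h δ hδ F (‖a‖⁻¹ • a) 1 (ha.real_smul (by positivity)) hna' ⟨1, by simp⟩ (by simp)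
  obtain ⟨B, hB, h1B, hCB, hiso⟩ := exists_isClosed_one_mem_unitization C hC
  simp only [mul_one, one_mul] at hcuntz
  have hsr := hr.norm_one_sub_cutPos_sub_le hr1 hδ.le
  have hs1 := hr.norm_one_sub_cutPos_le hr1 hδ.le
  have hg1 := hr.isPos_one_sub_cutPos hr1 hδ.le
  refine ⟨B, ⟨C, hCΩ, hiso⟩, hB, 1, h1B, .one A, mul_one 1, by simp, CutPos (1 - r) δ,
    B.cutPos_mem hB h1B (sub_mem h1B (hCB hrC)) δ, isPos_cutPos _ _, hg1, ?_, ?_, ?_, ?_⟩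
  · intro x hx
    obtain ⟨⟨y, hy, hy'⟩, z, hz, hz'⟩ := happrox x hx
    have hx' := hδF x hx
    set s := 1 - CutPos (1 - r) δ
    constructor
    · refine ⟨y, hCB hy, ?_⟩
      have h₁ : ‖(s - r) * x‖ ≤ δ * ‖x‖ := (norm_mul_le _ _).trans (by gcongr)
      have := norm_add_le ((s - r) * x) (r * x - y)
      rw [show (s - r) * x + (r * x - y) = s * x - y by noncomm_ring] at this
      linarith
    · refine ⟨z, hCB hz, ?_⟩
      have h₁ : ‖x * (s - r)‖ ≤ ‖x‖ * δ := (norm_mul_le _ _).trans (by gcongr)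
      have := norm_add_le (x * (s - r)) (x * r - z)
      rw [show x * (s - r) + (x * r - z) = x * s - z by noncomm_ring] at this
      linarith
  · intro x hx
    have hx' := hδF x hx
    have hc := hcomm x hx
    set s := 1 - CutPos (1 - r) δ
    have h₁ : ‖(s - r) * x‖ ≤ δ * ‖x‖ := (norm_mul_le _ _).trans (by gcongr)
    have h₂ : ‖x * (s - r)‖ ≤ ‖x‖ * δ := (norm_mul_le _ _).trans (by gcongr)
    have h₃ := norm_add_le ((s - r) * x - x * (s - r)) (r * x - x * r)
    have h₄ := norm_sub_le ((s - r) * x) (x * (s - r))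
    rw [show (s - r) * x - x * (s - r) + (r * x - x * r) = s * x - x * s by noncomm_ring] at h₃
    linarith
  · rw [sub_sub_cancel]
    exact hcuntz.of_real_smul_right (by positivity)
  · have h₁ := norm_mul_mul_self_sub_le (a := a) hr1 hs1 hsr
    rw [mul_smul_comm, smul_mul_assoc, norm_smul, norm_inv, norm_norm, inv_mul_eq_div,
      le_div_iff₀ hna] at hnorm
    linarith
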